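/- For all integers n > n′ ≥ 1, the type 𝒯_{n,n′} has consensus number exactly n: there is a wait-free binary consensus algorithm for n processes using objects of type 𝒯_{n,n′} together with registers, and there is no wait-free binary consensus algorithm for n+1 processes using objects of type 𝒯_{n,n′} together with registers. -/

import Mathlib

/-!
**Possibility for `n` processes.** Every process applies `op_x` once, `x` being its input, to a
single object initialised to `s`, and decides the bit returned. The first operation fixes the
bit; at most `n` operations are ever applied, and each of them returns that bit.

**Impossibility for `n + 1` processes.** This is a bivalency argument. A bivalent initial
configuration exists (`exists_biv_init`); an infinite execution through bivalent configurations
would contradict wait-freedom, so there is a critical configuration: a reachable bivalent one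
all of whose one-step successors are not bivalent (`exists_critical`). There, two processes whose
steps lead to opposite decisions must be poised at the same object, since otherwise their steps
commute. Two reachable configurations with the same object values and the same state of one
process have a common reachable decision (`common_reach`), because that process may run solo. So
the object type cannot be *confusing* (definition `Confusing`), that is, there are no two such
processes for which either the earlier step of one is invisible to the other, or two schedules,
one starting with each of them, leave the object in the same value and omit a common process.

Registers are confusing (`confusing_register`), and so is `𝒯_{n,n'}` for `n + 1` processes
(`confusing_TType`). For the latter the essential case is an object with value `s` on which all
processes are about to apply `op_0` or `op_1`: any `n` of these operations lead to `s_⊥`,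
whichever comes first, and one process is left that cannot tell the difference.
-/

namespace RecoverableConsensus

/-- A deterministic object type: a set of values, operations and responses together with a
transition function assigning to each (value, operation) pair a unique response and a unique
resulting value. -/
structure DetType : Type 1 where
  Value : Type
  Op : Type
  Resp : Type
  δ : Value → Op → Resp × Value

/-- A type is readable if it has a Read operation that returns (an injective encoding of)
the current value of the object without changing it. -/
def Readable (T : DetType) : Prop :=
  ∃ (read : T.Op) (ι : T.Value → T.Resp),
    Function.Injective ι ∧ ∀ v, T.δ v read = (ι v, v)

/-- The register type over the value set `V`: the operation `none` is Read (returning the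
current value without changing it) and `some v` is Write(v) (changing the value to `v`). -/
def RegisterType (V : Type) : DetType where
  Value := V
  Op := Option V
  Resp := V
  δ := fun u op =>
    match op with
    | none => (u, u)
    | some v => (v, v)

def IsRegister (T : DetType) : Prop := ∃ V : Type, T = RegisterType V

/-- An event is either a step by a process or a crash of a process. -/
inductive Event (n : ℕ) : Type where
  | step : Fin n → Event n
  | crash : Fin n → Event n
deriving DecidableEq

/-- An algorithm for `n` processes: a collection of shared objects, each with a deterministic
type and an initial value, and for each process a deterministic state machine with an initial
state depending on the process's binary input.  Each state determines the process's next step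
(`pending`: an operation applied to a designated object, or `none` for a no-op); the state
reached after a step is determined by the current state and the response received (`next`).
`output i s = some v` means that `s` is an output state of process `i` for the value `v`;
processes in output states take only no-op steps. -/
structure Algorithm (n : ℕ) : Type 1 where
  ObjIdx : Type
  objType : ObjIdx → DetType
  objInit : (o : ObjIdx) → (objType o).Value
  PState : Fin n → Type
  init : (i : Fin n) → Bool → PState i
  pending : (i : Fin n) → PState i → Option ((o : ObjIdx) × (objType o).Op)
  next : (i : Fin n) → PState i → (o : ObjIdx) → (objType o).Resp → PState i
  output : (i : Fin n) → PState i → Option Bool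
  output_noop : ∀ i s, output i s ≠ none → pending i s = none

/-- A configuration assigns a state to each process and a value to each object. -/
structure Config {n : ℕ} (A : Algorithm n) : Type where
  pstate : (i : Fin n) → A.PState i
  oval : (o : A.ObjIdx) → (A.objType o).Value

variable {n : ℕ}

/-- The effect of one event on a configuration.  A crash of `p_i` resets `p_i` to its initial
state (for its input) and leaves all object values unchanged; a step of `p_i` applies its
pending operation (if any) to the designated object, receiving the response determined by the
type's transition function. -/
noncomputable def applyEvent (A : Algorithm n) (input : Fin n → Bool) (C : Config A) :
    Event n → Config A
  | .crash i => { C with pstate := Function.update C.pstate i (A.init i (input i)) }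
  | .step i =>
    letI : DecidableEq A.ObjIdx := Classical.decEq _
    match A.pending i (C.pstate i) with
    | none => C
    | some ⟨o, op⟩ =>
      { pstate := Function.update C.pstate i
          (A.next i (C.pstate i) o ((A.objType o).δ (C.oval o) op).1),
        oval := Function.update C.oval o ((A.objType o).δ (C.oval o) op).2 }

/-- Since the algorithm is deterministic, a finite execution from `C` is determined by its
schedule, i.e. its list of events; `run A input C σ` is the configuration `Cσ` reached by
applying the events of `σ` in order from `C`. -/
noncomputable def run (A : Algorithm n) (input : Fin n → Bool) (C : Config A) :
    List (Event n) → Config A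
  | [] => C
  | e :: σ => run A input (applyEvent A input C e) σ

/-- The initial configuration: every process in its initial state, every object at its
initial value. -/
def initConfig (A : Algorithm n) (input : Fin n → Bool) : Config A :=
  ⟨fun i => A.init i (input i), A.objInit⟩

/-- Process `i` has decided `v` in `Cσ`: at some point along the execution `σ` from `C`,
process `i` was in an output state for `v`. -/
def HasDecided (A : Algorithm n) (input : Fin n → Bool) (C : Config A)
    (σ : List (Event n)) (i : Fin n) (v : Bool) : Prop :=
  ∃ τ, τ <+: σ ∧ A.output i ((run A input C τ).pstate i) = some v

def CrashFree (σ : List (Event n)) : Prop := ∀ i : Fin n, Event.crash i ∉ σ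

/-- The first `k` events of an infinite execution. -/
def initSeg (e : ℕ → Event n) (k : ℕ) : List (Event n) := (List.range k).map e

/-- Agreement: in every execution no two processes decide different values. -/
def Agreement (A : Algorithm n) : Prop :=
  ∀ (input : Fin n → Bool) (σ : List (Event n)) (i j : Fin n) (v w : Bool),
    HasDecided A input (initConfig A input) σ i v →
    HasDecided A input (initConfig A input) σ j w → v = w

/-- Validity: every decided value is the input of some process. -/
def Validity (A : Algorithm n) : Prop :=
  ∀ (input : Fin n → Bool) (σ : List (Event n)) (i : Fin n) (v : Bool),
    HasDecided A input (initConfig A input) σ i v → ∃ j, input j = v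

/-- Recoverable wait-freedom: every process, starting from its initial state, either crashes
or decides within a finite number of its own steps.  Equivalently: in every infinite execution
in which process `i` starts at (or is reset by a crash to) its initial state, takes infinitely
many steps and crashes only finitely often, it eventually reaches an output state. -/
def RecWaitFree (A : Algorithm n) : Prop :=
  ∀ (input : Fin n → Bool) (C : Config A) (e : ℕ → Event n) (i : Fin n),
    (C.pstate i = A.init i (input i) ∨ ∃ k, e k = Event.crash i) →
    (∀ m, ∃ k, m ≤ k ∧ e k = Event.step i) →
    (∃ m, ∀ k, m ≤ k → e k ≠ Event.crash i) →
    ∃ (k : ℕ) (v : Bool), A.output i ((run A input C (initSeg e k)).pstate i) = some v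

/-- A recoverable wait-free binary consensus algorithm. -/
def SolvesRecConsensus (A : Algorithm n) : Prop :=
  Agreement A ∧ Validity A ∧ RecWaitFree A

/-- Agreement restricted to crash-free executions. -/
def AgreementCF (A : Algorithm n) : Prop :=
  ∀ (input : Fin n → Bool) (σ : List (Event n)), CrashFree σ →
    ∀ (i j : Fin n) (v w : Bool),
      HasDecided A input (initConfig A input) σ i v →
      HasDecided A input (initConfig A input) σ j w → v = w

/-- Validity restricted to crash-free executions. -/
def ValidityCF (A : Algorithm n) : Prop :=
  ∀ (input : Fin n → Bool) (σ : List (Event n)), CrashFree σ →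
    ∀ (i : Fin n) (v : Bool),
      HasDecided A input (initConfig A input) σ i v → ∃ j, input j = v

/-- Wait-freedom: in crash-free executions, every process that takes infinitely many steps
decides. -/
def WaitFree (A : Algorithm n) : Prop :=
  ∀ (input : Fin n → Bool) (e : ℕ → Event n),
    (∀ (k : ℕ) (i : Fin n), e k ≠ Event.crash i) →
    ∀ i : Fin n, (∀ m, ∃ k, m ≤ k ∧ e k = Event.step i) →
    ∃ (k : ℕ) (v : Bool),
      A.output i ((run A input (initConfig A input) (initSeg e k)).pstate i) = some v

/-- A wait-free binary consensus algorithm (for the model in which crashes are permanent,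
i.e. only crash-free executions are relevant). -/
def SolvesWFConsensus (A : Algorithm n) : Prop :=
  AgreementCF A ∧ ValidityCF A ∧ WaitFree A

/-- The number of crashes of process `i` in `σ`. -/
def crashCount (i : Fin n) (σ : List (Event n)) : ℕ :=
  (σ.filter fun e => decide (e = Event.crash i)).length

def isStepBelow (i : Fin n) : Event n → Bool
  | .step j => decide (j < i)
  | .crash _ => false

/-- The total number of steps taken by processes `p_0, …, p_{i-1}` in `σ`. -/
def stepsBelow (i : Fin n) (σ : List (Event n)) : ℕ := (σ.filter (isStepBelow i)).length

/-- The crash bound: for every process `p_i`, the number of crashes of `p_i` is at most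
`z·n` times the total number of steps of `p_0, …, p_{i-1}` (for `i = 0` this says that `p_0`
never crashes). -/
def EMem (z : ℕ) (σ : List (Event n)) : Prop :=
  ∀ i : Fin n, crashCount i σ ≤ z * n * stepsBelow i σ

/-- `𝓔_z`: executions satisfying the crash bound. -/
def ESet (n z : ℕ) : Set (List (Event n)) := { σ | EMem z σ }

/-- `𝓔*_z`: executions satisfying the crash bound in every prefix. -/
def EStarSet (n z : ℕ) : Set (List (Event n)) := { σ | ∀ τ, τ <+: σ → EMem z τ }

/-- `e` is an event by a process in `P`. -/
def eventBy (P : Set (Fin n)) : Event n → Prop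
  | .step i => i ∈ P
  | .crash i => i ∈ P

/-- The set of processes `P` is `v`-univalent in the execution `α` from `C` with respect to
the set of executions `𝒜`. -/
def VUnivalentIn (A : Algorithm n) (input : Fin n → Bool) (C : Config A)
    (𝒜 : Set (List (Event n))) (P : Set (Fin n)) (α : List (Event n)) (v : Bool) : Prop :=
  α ∈ 𝒜 ∧ ∀ β : List (Event n), (∀ e ∈ β, eventBy P e) → (α ++ β) ∈ 𝒜 →
    ∀ (i : Fin n) (w : Bool), HasDecided A input C (α ++ β) i w → w = v

/-- The set of processes `P` is bivalent in the execution `α` from `C` with respect to `𝒜`. -/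
def BivalentIn (A : Algorithm n) (input : Fin n → Bool) (C : Config A)
    (𝒜 : Set (List (Event n))) (P : Set (Fin n)) (α : List (Event n)) : Prop :=
  ∀ v : Bool, ∃ β : List (Event n), (∀ e ∈ β, eventBy P e) ∧ (α ++ β) ∈ 𝒜 ∧
    ∃ i : Fin n, HasDecided A input C (α ++ β) i v

/-- `P` is univalent in `α` with respect to `𝒜`: `v`-univalent for some `v`. -/
def UnivalentIn (A : Algorithm n) (input : Fin n → Bool) (C : Config A)
    (𝒜 : Set (List (Event n))) (P : Set (Fin n)) (α : List (Event n)) : Prop :=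
  ∃ v : Bool, VUnivalentIn A input C 𝒜 P α v

/-- `α ∈ 𝒜` is critical with respect to `𝒜`: `α` is bivalent with respect to `𝒜` and every
nonempty extension of `α` inside `𝒜` is univalent with respect to `𝒜`. -/
def Critical (A : Algorithm n) (input : Fin n → Bool) (C : Config A)
    (𝒜 : Set (List (Event n))) (α : List (Event n)) : Prop :=
  α ∈ 𝒜 ∧ BivalentIn A input C 𝒜 Set.univ α ∧
  ∀ β : List (Event n), β ≠ [] → (α ++ β) ∈ 𝒜 → UnivalentIn A input C 𝒜 Set.univ (α ++ β)

/-- Process `i` is on team `v` in `Cα` (with respect to `𝒜`): `α p_i` is `v`-univalent. -/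
def OnTeam (A : Algorithm n) (input : Fin n → Bool) (C : Config A)
    (𝒜 : Set (List (Event n))) (α : List (Event n)) (i : Fin n) (v : Bool) : Prop :=
  VUnivalentIn A input C 𝒜 Set.univ (α ++ [Event.step i]) v

/-- Process `i` is poised to apply an operation to object `O` in configuration `C`. -/
def PoisedAt (A : Algorithm n) (C : Config A) (i : Fin n) (O : A.ObjIdx) : Prop :=
  ∃ op, A.pending i (C.pstate i) = some ⟨O, op⟩

/-- `σ ∈ 𝒮(P)`: a crash-free schedule in which each process of `P` takes at most one step
and no other process takes a step. -/
def IsSched (P : Set (Fin n)) (σ : List (Event n)) : Prop :=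
  ∃ l : List (Fin n), l.Nodup ∧ (∀ j ∈ l, j ∈ P) ∧ σ = l.map Event.step

/-- The schedule `λ_k = c_k c_{k+1} ⋯ c_{n-1}`. -/
def lambdaSched (n k : ℕ) : List (Event n) :=
  ((List.finRange n).filter fun j => decide (k ≤ j.val)).map Event.crash

/-- `U_v`: the set of values of object `O` reachable from `Dα` by a schedule in `𝒮(𝒫)`
whose first process is on team `v`. -/
def USetCfg (A : Algorithm n) (input : Fin n → Bool) (D : Config A)
    (𝒜 : Set (List (Event n))) (α : List (Event n)) (O : A.ObjIdx) (v : Bool) :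
    Set (A.objType O).Value :=
  { w | ∃ (j : Fin n) (σ : List (Event n)), OnTeam A input D 𝒜 α j v ∧
        IsSched {k : Fin n | k ≠ j} σ ∧
        w = (run A input D (α ++ Event.step j :: σ)).oval O }

/-- The configuration `Dα` is `v`-hiding. -/
def VHiding (A : Algorithm n) (input : Fin n → Bool) (D : Config A)
    (𝒜 : Set (List (Event n))) (α : List (Event n)) (O : A.ObjIdx) (v : Bool) : Prop :=
  USetCfg A input D 𝒜 α O false ∩ USetCfg A input D 𝒜 α O true = ∅ ∧
  (run A input D α).oval O ∈ USetCfg A input D 𝒜 α O v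

/-- The configuration `Dα` is `n`-recording. -/
def NRecordingCfg (A : Algorithm n) (input : Fin n → Bool) (D : Config A)
    (𝒜 : Set (List (Event n))) (α : List (Event n)) (O : A.ObjIdx) : Prop :=
  USetCfg A input D 𝒜 α O false ∩ USetCfg A input D 𝒜 α O true = ∅ ∧
  ∀ v : Bool, (run A input D α).oval O ∈ USetCfg A input D 𝒜 α O v →
    ∃! j : Fin n, OnTeam A input D 𝒜 α j (!v)

/-- Apply the operations `o i` of the processes listed in `σ`, in order, to an object of type
`T`, starting from the value `u`. -/
def applyOps (T : DetType) (o : Fin n → T.Op) : T.Value → List (Fin n) → T.Value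
  | u, [] => u
  | u, i :: σ => applyOps T o (T.δ u (o i)).2 σ

/-- `U_x`: the set of values obtainable by applying the operations of the processes of a
duplicate-free schedule whose first process is on team `x` to an object with initial value
`u`. -/
def UVals (T : DetType) (o : Fin n → T.Op) (u : T.Value) (team : Fin n → Bool) (x : Bool) :
    Set T.Value :=
  { v | ∃ (i : Fin n) (σ : List (Fin n)), team i = x ∧ (i :: σ).Nodup ∧
        v = applyOps T o u (i :: σ) }

/-- A deterministic type `T` is `n`-recording. -/
def NRecording (n : ℕ) (T : DetType) : Prop :=
  ∃ (u : T.Value) (team : Fin n → Bool) (o : Fin n → T.Op),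
    (∀ x : Bool, ∃ i, team i = x) ∧
    (UVals T o u team false ∩ UVals T o u team true = ∅) ∧
    (∀ x : Bool, u ∈ UVals T o u team x → ∃! i, team i = !x)

end RecoverableConsensus

namespace RecoverableConsensus

/-- The values of the type `𝒯_{n,n'}`: `s`, `s_⊥`, and `s_{x,i}` for `x ∈ {0,1}` and
`i ∈ {1, …, n-1}` (here `mid x i` with `i : Fin (n-1)` represents `s_{x, i+1}`). -/
inductive TVal (n : ℕ) : Type where
  | s : TVal n
  | bot : TVal n
  | mid : Bool → Fin (n - 1) → TVal n
deriving DecidableEq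

/-- The operations of `𝒯_{n,n'}`. -/
inductive TOp : Type where
  | op0 | op1 | opR
deriving DecidableEq

/-- The responses of `𝒯_{n,n'}`: a bit, a value, or `⊥`. -/
inductive TResp (n : ℕ) : Type where
  | bit : Bool → TResp n
  | val : TVal n → TResp n
  | botR : TResp n
deriving DecidableEq

/-- The deterministic (non-readable) type `𝒯_{n,n'}` for `n > n' ≥ 1`. -/
def TType (n n' : ℕ) (hn : 2 ≤ n) : DetType where
  Value := TVal n
  Op := TOp
  Resp := TResp n
  δ := fun v op =>
    match v, op with
    | .s, .op0 => (.bit false, .mid false ⟨0, by omega⟩)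
    | .s, .op1 => (.bit true, .mid true ⟨0, by omega⟩)
    | .s, .opR => (.val .s, .s)
    | .bot, _ => (.botR, .bot)
    | .mid x i, .op0 =>
        if h : i.val + 1 < n - 1 then (.bit x, .mid x ⟨i.val + 1, h⟩) else (.bit x, .bot)
    | .mid x i, .op1 =>
        if h : i.val + 1 < n - 1 then (.bit x, .mid x ⟨i.val + 1, h⟩) else (.bit x, .bot)
    | .mid x i, .opR =>
        if i.val + 1 ≤ n' then (.val (.mid x i), .mid x i) else (.botR, .bot)

/-- The algorithm uses only objects of type `T` together with registers. -/
def UsesTypeAndRegisters {n : ℕ} (A : Algorithm n) (T : DetType) : Prop :=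
  ∀ o : A.ObjIdx, A.objType o = T ∨ IsRegister (A.objType o)

end RecoverableConsensus

namespace RecoverableConsensus

/-! ### Crash-free executions -/

section CrashFreeRuns

variable {N : ℕ} (A : Algorithm N)

/-- One step of process `i` from `C`. The input vector is irrelevant for steps (it matters only
for crashes), so a dummy one is used. -/
noncomputable def stp (C : Config A) (i : Fin N) : Config A :=
  applyEvent A (fun _ => false) C (.step i)

/-- The configuration reached from `C` by the crash-free schedule `l`. -/
noncomputable def runs (C : Config A) (l : List (Fin N)) : Config A := l.foldl (stp A) C

variable {A}

lemma stp_none {C : Config A} {i : Fin N} (h : A.pending i (C.pstate i) = none) :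
    stp A C i = C := by
  simp [stp, applyEvent, h]

lemma stp_pstate_ne (C : Config A) {i k : Fin N} (hk : k ≠ i) :
    (stp A C i).pstate k = C.pstate k := by
  unfold stp applyEvent
  dsimp only
  split <;> simp [hk]

lemma stp_pstate_self {C : Config A} {i : Fin N} {o : A.ObjIdx} {op : (A.objType o).Op}
    (h : A.pending i (C.pstate i) = some ⟨o, op⟩) :
    (stp A C i).pstate i = A.next i (C.pstate i) o ((A.objType o).δ (C.oval o) op).1 := by
  simp [stp, applyEvent, h]

lemma stp_oval_self {C : Config A} {i : Fin N} {o : A.ObjIdx} {op : (A.objType o).Op}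
    (h : A.pending i (C.pstate i) = some ⟨o, op⟩) :
    (stp A C i).oval o = ((A.objType o).δ (C.oval o) op).2 := by
  simp [stp, applyEvent, h]

lemma stp_oval_ne {C : Config A} {i : Fin N} {o : A.ObjIdx} {op : (A.objType o).Op}
    (h : A.pending i (C.pstate i) = some ⟨o, op⟩) {o' : A.ObjIdx} (ho : o' ≠ o) :
    (stp A C i).oval o' = C.oval o' := by
  simp [stp, applyEvent, h, ho]

lemma run_map_step (input : Fin N → Bool) (C : Config A) (l : List (Fin N)) :
    run A input C (l.map Event.step) = runs A C l := by
  induction l generalizing C with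
  | nil => rfl
  | cons i l ih => exact ih _

lemma runs_append (C : Config A) (l l' : List (Fin N)) :
    runs A C (l ++ l') = runs A (runs A C l) l' := by
  simp [runs]

lemma runs_cons (C : Config A) (i : Fin N) (l : List (Fin N)) :
    runs A C (i :: l) = runs A (stp A C i) l := rfl

lemma exists_eq_map_of_crashFree {σ : List (Event N)} (h : CrashFree σ) :
    ∃ l : List (Fin N), σ = l.map Event.step := by
  induction σ with
  | nil => exact ⟨[], rfl⟩
  | cons e σ ih =>
    obtain ⟨l, rfl⟩ := ih fun i hi => h i (List.mem_cons_of_mem _ hi)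
    cases e with
    | step i => exact ⟨i :: l, rfl⟩
    | crash i => exact absurd List.mem_cons_self (h i)

lemma crashFree_map (l : List (Fin N)) : CrashFree (l.map Event.step) := by
  intro i; simp

lemma stp_output {C : Config A} {j : Fin N} {v : Bool}
    (h : A.output j (C.pstate j) = some v) (i : Fin N) :
    A.output j ((stp A C i).pstate j) = some v := by
  by_cases hij : j = i
  · subst hij
    rw [stp_none (A.output_noop j _ (by simp [h]))]
    exact h
  · rwa [stp_pstate_ne C hij]

/-- Decisions are irrevocable. -/
lemma runs_output {C : Config A} {j : Fin N} {v : Bool}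
    (h : A.output j (C.pstate j) = some v) (l : List (Fin N)) :
    A.output j ((runs A C l).pstate j) = some v := by
  induction l generalizing C with
  | nil => exact h
  | cons i l ih => exact ih (stp_output h i)

lemma hasDecided_map_iff (input : Fin N → Bool) (C : Config A) (l : List (Fin N)) (i : Fin N)
    (v : Bool) :
    HasDecided A input C (l.map Event.step) i v ↔
      A.output i ((runs A C l).pstate i) = some v := by
  constructor
  · rintro ⟨τ, hτ, h⟩
    obtain ⟨l', hl', rfl⟩ := List.prefix_map_iff.1 hτ
    obtain ⟨l'', rfl⟩ := hl'
    rw [run_map_step] at h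
    rw [runs_append]
    exact runs_output h _
  · intro h
    exact ⟨_, List.prefix_rfl, by rwa [run_map_step]⟩

lemma initSeg_step (f : ℕ → Fin N) (k : ℕ) :
    initSeg (fun m => Event.step (f m)) k = ((List.range k).map f).map Event.step := by
  simp [initSeg]

end CrashFreeRuns

/-! ### The algorithm for `n` processes -/

/-- The one-object algorithm. A state `inl b` means that the process has input `b` and has not
moved yet; a state `inr b` means that it has decided `b`. -/
def oneShot (n n' : ℕ) (hn : 2 ≤ n) : Algorithm n where
  ObjIdx := Unit
  objType _ := TType n n' hn
  objInit _ := TVal.s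
  PState _ := Bool ⊕ Bool
  init _ b := .inl b
  pending _ s := match s with
    | .inl b => some ⟨(), if b then TOp.op1 else TOp.op0⟩
    | .inr _ => none
  next _ _ _ r := match (r : TResp n) with
    | .bit x => .inr x
    | _ => .inr false
  output _ s := match s with
    | .inl _ => none
    | .inr x => some x
  output_noop i s h := by cases s <;> simp_all

/-- The value of the object after `c` operations `op_0`, `op_1`, the first of which was
`op_x`. -/
def valAfter (n : ℕ) (x : Bool) (c : ℕ) : TVal n :=
  if c = 0 then .s else if h : c - 1 < n - 1 then .mid x ⟨c - 1, h⟩ else .bot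

lemma δ_valAfter_zero (n n' : ℕ) (hn : 2 ≤ n) (x b : Bool) :
    (TType n n' hn).δ (valAfter n x 0) (if b then TOp.op1 else TOp.op0) =
      (.bit b, valAfter n b 1) := by
  cases b <;> simp [valAfter, TType, show 0 < n - 1 by omega]

lemma δ_valAfter_pos (n n' : ℕ) (hn : 2 ≤ n) (x b : Bool) (c : ℕ) (h0 : c ≠ 0) (hc : c < n) :
    (TType n n' hn).δ (valAfter n x c) (if b then TOp.op1 else TOp.op0) =
      (.bit x, valAfter n x (c + 1)) := by
  have h : c - 1 < n - 1 := by omega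
  have e : c - 1 + 1 = c := by omega
  cases b <;> simp only [valAfter, h0, h, TType] <;> by_cases h' : c < n - 1 <;> simp [e, h']

/-- The invariant of `oneShot`: `S` is the set of processes that have moved, and `x` is the bit
fixed by the first of them (arbitrary while `S` is empty). -/
def OneShotInv (n n' : ℕ) (hn : 2 ≤ n) (input : Fin n → Bool)
    (C : Config (oneShot n n' hn)) : Prop :=
  ∃ (x : Bool) (S : Finset (Fin n)), (S.Nonempty → ∃ j, input j = x) ∧
    (∀ i ∈ S, C.pstate i = Sum.inr x) ∧ (∀ i ∉ S, C.pstate i = Sum.inl (input i)) ∧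
    C.oval () = valAfter n x S.card

lemma oneShotInv_stp (n n' : ℕ) (hn : 2 ≤ n) (input : Fin n → Bool)
    (C : Config (oneShot n n' hn)) (h : OneShotInv n n' hn input C) (i : Fin n) :
    OneShotInv n n' hn input (stp _ C i) := by
  obtain ⟨x, S, hx, hS, hS', hv⟩ := h
  by_cases hi : i ∈ S
  · rw [stp_none]
    · exact ⟨x, S, hx, hS, hS', hv⟩
    · rw [hS i hi]; rfl
  have hp : (oneShot n n' hn).pending i (C.pstate i) =
      some ⟨(), if input i then TOp.op1 else TOp.op0⟩ := by rw [hS' i hi]; rfl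
  have hcard : S.card < n := by
    simpa using Finset.card_lt_univ_of_notMem hi
  obtain ⟨y, hy, hyS, hδ⟩ : ∃ y, (∃ j, input j = y) ∧ (∀ k ∈ S, C.pstate k = Sum.inr y) ∧
      (TType n n' hn).δ (C.oval ()) (if input i then TOp.op1 else TOp.op0) =
        (.bit y, valAfter n y (S.card + 1)) := by
    rcases S.eq_empty_or_nonempty with rfl | hne
    · refine ⟨input i, ⟨i, rfl⟩, by simp, ?_⟩
      rw [hv]; exact δ_valAfter_zero n n' hn x (input i)
    · refine ⟨x, hx hne, hS, ?_⟩
      rw [hv]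
      exact δ_valAfter_pos n n' hn x (input i) _ (Finset.card_pos.2 hne).ne' hcard
  refine ⟨y, insert i S, fun _ => hy, ?_, ?_, ?_⟩
  · intro k hk
    by_cases hki : k = i
    · subst hki
      rw [stp_pstate_self hp]
      exact congrArg (fun z => (oneShot n n' hn).next k (C.pstate k) () z.1) hδ
    · rw [stp_pstate_ne C hki]
      exact hyS k (by simpa [hki] using hk)
  · intro k hk
    simp only [Finset.mem_insert, not_or] at hk
    rw [stp_pstate_ne C hk.1]
    exact hS' k hk.2
  · rw [stp_oval_self hp, Finset.card_insert_of_notMem hi]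
    exact congrArg Prod.snd hδ

lemma oneShotInv_runs (n n' : ℕ) (hn : 2 ≤ n) (input : Fin n → Bool) (l : List (Fin n))
    (C : Config (oneShot n n' hn)) (h : OneShotInv n n' hn input C) :
    OneShotInv n n' hn input (runs _ C l) := by
  induction l generalizing C with
  | nil => exact h
  | cons i l ih => exact ih _ (oneShotInv_stp n n' hn input C h i)

lemma oneShot_decided (n n' : ℕ) (hn : 2 ≤ n) (input : Fin n → Bool) (l : List (Fin n)) :
    ∃ x, ∀ i v, (oneShot n n' hn).output i
        ((runs _ (initConfig (oneShot n n' hn) input) l).pstate i) = some v →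
      v = x ∧ ∃ j, input j = x := by
  obtain ⟨x, S, hx, hS, hS', -⟩ := oneShotInv_runs n n' hn input l
    (initConfig (oneShot n n' hn) input)
    ⟨false, ∅, by simp, by simp, fun i _ => rfl, rfl⟩
  refine ⟨x, fun i v h => ?_⟩
  by_cases hi : i ∈ S
  · rw [hS i hi] at h
    exact ⟨(Option.some.inj h).symm, hx ⟨i, hi⟩⟩
  · rw [hS' i hi] at h
    cases h

lemma oneShot_output_stp (n n' : ℕ) (hn : 2 ≤ n) (C : Config (oneShot n n' hn)) (i : Fin n) :
    ∃ v, (oneShot n n' hn).output i ((stp _ C i).pstate i) = some v := by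
  rcases h : C.pstate i with b | x
  · have hp : (oneShot n n' hn).pending i (C.pstate i) =
      some ⟨(), if b then TOp.op1 else TOp.op0⟩ := by rw [h]; rfl
    rw [stp_pstate_self hp]
    generalize (((oneShot n n' hn).objType ()).δ (C.oval ()) _).1 = r
    cases (r : TResp n) with
    | bit y => exact ⟨y, rfl⟩
    | val y => exact ⟨false, rfl⟩
    | botR => exact ⟨false, rfl⟩
  · rw [stp_none (by rw [h]; rfl), h]
    exact ⟨x, rfl⟩

lemma oneShot_solves (n n' : ℕ) (hn : 2 ≤ n) : SolvesWFConsensus (oneShot n n' hn) := by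
  refine ⟨?_, ?_, ?_⟩
  · intro input σ hσ i j v w hv hw
    obtain ⟨l, rfl⟩ := exists_eq_map_of_crashFree hσ
    rw [hasDecided_map_iff] at hv hw
    obtain ⟨x, hx⟩ := oneShot_decided n n' hn input l
    rw [(hx i v hv).1, (hx j w hw).1]
  · intro input σ hσ i v hv
    obtain ⟨l, rfl⟩ := exists_eq_map_of_crashFree hσ
    rw [hasDecided_map_iff] at hv
    obtain ⟨x, hx⟩ := oneShot_decided n n' hn input l
    obtain ⟨rfl, h⟩ := hx i v hv
    exact h
  · intro input e he i hi
    obtain ⟨f, rfl⟩ : ∃ f : ℕ → Fin n, e = fun m => Event.step (f m) := by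
      have : ∀ k, ∃ j, e k = Event.step j := fun k => by
        rcases h : e k with j | j
        · exact ⟨j, rfl⟩
        · exact absurd h (he k j)
      choose f hf using this
      exact ⟨f, funext hf⟩
    obtain ⟨k, -, hk⟩ := hi 0
    refine ⟨k + 1, ?_⟩
    rw [initSeg_step, run_map_step, List.range_succ, List.map_append, runs_append]
    have hk' : f k = i := by simpa using hk
    simp only [List.map_cons, List.map_nil, hk']
    exact oneShot_output_stp n n' hn _ i

/-! ### Valency -/

section Valency

variable {N : ℕ} {A : Algorithm N}

/-- `C` is reachable from the initial configuration for `input` by a crash-free execution. -/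
def Reachable (A : Algorithm N) (input : Fin N → Bool) (C : Config A) : Prop :=
  ∃ l, C = runs A (initConfig A input) l

lemma Reachable.runs {input : Fin N → Bool} {C : Config A} (h : Reachable A input C)
    (l : List (Fin N)) : Reachable A input (RecoverableConsensus.runs A C l) := by
  obtain ⟨l', rfl⟩ := h
  exact ⟨l' ++ l, (runs_append _ _ _).symm⟩

lemma Reachable.stp {input : Fin N → Bool} {C : Config A} (h : Reachable A input C)
    (i : Fin N) : Reachable A input (RecoverableConsensus.stp A C i) := h.runs [i]

/-- Some crash-free execution from `C` leads to a decision for `v`. -/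
def CanDecide (C : Config A) (v : Bool) : Prop :=
  ∃ l i, A.output i ((runs A C l).pstate i) = some v

/-- `C` is bivalent. -/
def Biv (C : Config A) : Prop := ∀ v, CanDecide C v

lemma CanDecide.of_runs {C : Config A} {l : List (Fin N)} {v : Bool}
    (h : CanDecide (runs A C l) v) : CanDecide C v := by
  obtain ⟨l', i, h⟩ := h
  exact ⟨l ++ l', i, by rwa [runs_append]⟩

lemma not_biv_of_output (hA : AgreementCF A) {input : Fin N → Bool} {C : Config A}
    (hC : Reachable A input C) {i : Fin N} {v : Bool}
    (h : A.output i (C.pstate i) = some v) : ¬ Biv C := by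
  intro hb
  obtain ⟨l', rfl⟩ := hC
  obtain ⟨l, j, hj⟩ := hb (!v)
  have hi := runs_output h l
  rw [← runs_append] at hi hj
  have := hA input _ (crashFree_map (l' ++ l)) i j v (!v)
    ((hasDecided_map_iff _ _ _ _ _).2 hi) ((hasDecided_map_iff _ _ _ _ _).2 hj)
  cases v <;> simp at this

lemma waitFree_runs (hW : WaitFree A) (input : Fin N → Bool) (f : ℕ → Fin N) (i : Fin N)
    (hf : ∀ m, ∃ k, m ≤ k ∧ f k = i) :
    ∃ k v, A.output i ((runs A (initConfig A input) ((List.range k).map f)).pstate i)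
      = some v := by
  obtain ⟨k, v, h⟩ := hW input (fun m => Event.step (f m)) (by simp) i
    (fun m => by obtain ⟨k, hk, h⟩ := hf m; exact ⟨k, hk, by rw [h]⟩)
  rw [initSeg_step, run_map_step] at h
  exact ⟨k, v, h⟩

/-- From a reachable configuration, every process running solo decides. -/
lemma solo_decides (hW : WaitFree A) {input : Fin N → Bool} {C : Config A}
    (hC : Reachable A input C) (j : Fin N) :
    ∃ m v, A.output j ((runs A C (List.replicate m j)).pstate j) = some v := by
  obtain ⟨l, rfl⟩ := hC
  obtain ⟨k, v, h⟩ := waitFree_runs hW input (fun k => l.getD k j) j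
    (fun m => ⟨max m l.length, le_max_left _ _, by simp⟩)
  refine ⟨k, v, ?_⟩
  rw [← runs_append]
  have e : l ++ List.replicate k j = (List.range (k + l.length)).map (fun k => l.getD k j) := by
    apply List.ext_getElem
    · simp [add_comm]
    · intro m h1 h2
      by_cases hm : m < l.length
      · simp [hm]
      · simp [hm, List.getElem_append_right (not_lt.1 hm)]
  rw [e, List.range_add, List.map_append, runs_append]
  exact runs_output h _

/-- A solo run of `j` depends only on the object values and the state of `j`. -/
lemma solo_congr {C D : Config A} {j : Fin N} (ho : C.oval = D.oval)
    (hp : C.pstate j = D.pstate j) (m : ℕ) :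
    (runs A C (List.replicate m j)).pstate j = (runs A D (List.replicate m j)).pstate j := by
  induction m generalizing C D with
  | zero => exact hp
  | succ m ih =>
    rw [List.replicate_succ, runs_cons, runs_cons]
    rcases h : A.pending j (C.pstate j) with _ | ⟨o, op⟩
    · rw [stp_none h, stp_none (hp ▸ h)]
      exact ih ho hp
    · have h' : A.pending j (D.pstate j) = some ⟨o, op⟩ := hp ▸ h
      apply ih
      · funext o'
        by_cases hoo : o' = o
        · subst hoo
          rw [stp_oval_self h, stp_oval_self h', ho]
        · rw [stp_oval_ne h hoo, stp_oval_ne h' hoo, ho]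
      · rw [stp_pstate_self h, stp_pstate_self h', ho, hp]

lemma common_reach (hW : WaitFree A) {input : Fin N → Bool} {C D : Config A}
    (hC : Reachable A input C) {j : Fin N} (ho : C.oval = D.oval)
    (hp : C.pstate j = D.pstate j) : ∃ v, CanDecide C v ∧ CanDecide D v := by
  obtain ⟨m, v, h⟩ := solo_decides hW hC j
  exact ⟨v, ⟨_, j, h⟩, ⟨_, j, solo_congr ho hp m ▸ h⟩⟩

/-- A process with input `v` running solo cannot distinguish its situation from all inputs being
`v`, so it decides `v`. Hence mixed inputs give a bivalent configuration. -/
lemma exists_biv_init (hV : ValidityCF A) (hW : WaitFree A) {p q : Fin N} (hpq : p ≠ q) :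
    ∃ input, Biv (initConfig A input) := by
  classical
  refine ⟨fun i => decide (i = p), fun v => ?_⟩
  obtain ⟨r, hr⟩ : ∃ r, decide (r = p) = v := by
    cases v
    · exact ⟨q, by simpa using hpq.symm⟩
    · exact ⟨p, by simp⟩
  obtain ⟨m, w, h⟩ := solo_decides hW (A := A) (input := fun _ => v) ⟨[], rfl⟩ r
  obtain ⟨-, rfl⟩ := hV _ _ (crashFree_map _) r w ((hasDecided_map_iff _ _ _ _ _).2 h)
  refine ⟨List.replicate m r, r, ?_⟩
  rw [solo_congr (C := initConfig A fun i => decide (i = p)) (D := initConfig A fun _ => v)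
    rfl (by simp [initConfig, hr]) m]
  exact h

lemma exists_critical (hA : AgreementCF A) (hW : WaitFree A) {input : Fin N → Bool}
    (h0 : Biv (initConfig A input)) :
    ∃ C, Reachable A input C ∧ Biv C ∧ ∀ i, ¬ Biv (stp A C i) := by
  by_contra! hcon
  have : Nonempty (Fin N) := let ⟨_, i, _⟩ := h0 true; ⟨i⟩
  choose! g hg using hcon
  -- The sequence of bivalent configurations obtained by always scheduling `g`.
  let c : ℕ → Config A := fun k => Nat.rec (initConfig A input) (fun _ C => stp A C (g C)) k
  have hc : ∀ k, Reachable A input (c k) ∧ Biv (c k) := by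
    intro k
    induction k with
    | zero => exact ⟨⟨[], rfl⟩, h0⟩
    | succ k ih => exact ⟨ih.1.stp _, hg _ ih.1 ih.2⟩
  have hr : ∀ k, runs A (initConfig A input) ((List.range k).map fun m => g (c m)) = c k := by
    intro k
    induction k with
    | zero => rfl
    | succ k ih =>
      rw [List.range_succ, List.map_append, runs_append, ih]
      rfl
  obtain ⟨i, hi⟩ := Finite.exists_infinite_fiber fun m => g (c m)
  rw [Set.infinite_coe_iff] at hi
  obtain ⟨k, v, h⟩ := waitFree_runs hW input (fun m => g (c m)) i fun m => by
    obtain ⟨k, hk, hmk⟩ := hi.exists_gt m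
    exact ⟨k, hmk.le, hk⟩
  rw [hr] at h
  exact not_biv_of_output hA (hc k).1 h (hc k).2

/-- Steps of distinct processes, all poised at the same object `O` in `D`, affect only `O` and
the states of the scheduled processes. -/
lemma runs_block {O : A.ObjIdx} {o : Fin N → (A.objType O).Op} (l : List (Fin N))
    (hl : l.Nodup) (D : Config A)
    (hD : ∀ i ∈ l, A.pending i (D.pstate i) = some ⟨O, o i⟩) :
    (runs A D l).oval O = applyOps (A.objType O) o (D.oval O) l ∧
    (∀ o' ≠ O, (runs A D l).oval o' = D.oval o') ∧
    (∀ k ∉ l, (runs A D l).pstate k = D.pstate k) := by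
  induction l generalizing D with
  | nil => exact ⟨rfl, fun _ _ => rfl, fun _ _ => rfl⟩
  | cons i l ih =>
    rw [List.nodup_cons] at hl
    have hi := hD i List.mem_cons_self
    obtain ⟨h1, h2, h3⟩ := ih hl.2 (stp A D i) fun k hk => by
      rw [stp_pstate_ne D (ne_of_mem_of_not_mem hk hl.1)]
      exact hD k (List.mem_cons_of_mem _ hk)
    refine ⟨?_, ?_, ?_⟩
    · rw [runs_cons, h1, stp_oval_self hi]; rfl
    · intro o' ho'
      rw [runs_cons, h2 o' ho', stp_oval_ne hi ho']
    · intro k hk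
      rw [List.mem_cons, not_or] at hk
      rw [runs_cons, h3 k hk.2, stp_pstate_ne D hk.1]

end Valency

/-! ### Confusing types -/

/-- `T` is confusing for `N` processes if, whatever the value `u` and the pending operations
`o`, and however the processes are split into two nonempty teams, there are processes `i` and `j`
of opposite teams such that either `j` does not notice a preceding step of `i` (the response and
the resulting value are the same), or there are schedules, one starting with `i` and the other
with `j`, that lead to the same value and both omit some process `k`. -/
def Confusing (N : ℕ) (T : DetType) : Prop :=
  ∀ (u : T.Value) (o : Fin N → T.Op) (team : Fin N → Bool), (∀ x, ∃ i, team i = x) →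
    ∃ i j, team i ≠ team j ∧
      (T.δ (T.δ u (o i)).2 (o j) = T.δ u (o j) ∨
      ∃ (l₁ l₂ : List (Fin N)) (k : Fin N), (i :: l₁).Nodup ∧ (j :: l₂).Nodup ∧
        k ∉ i :: l₁ ∧ k ∉ j :: l₂ ∧ applyOps T o u (i :: l₁) = applyOps T o u (j :: l₂))

/-- If `j` does not notice a preceding step of `i`, the two steps do not lead to opposite
decisions. -/
lemma common_of_unnoticed {N : ℕ} {A : Algorithm N} (hW : WaitFree A) {input : Fin N → Bool}
    {C : Config A} (hC : Reachable A input C) {O : A.ObjIdx} {opi opj : (A.objType O).Op}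
    {i j : Fin N} (hij : i ≠ j) (hi : A.pending i (C.pstate i) = some ⟨O, opi⟩)
    (hj : A.pending j (C.pstate j) = some ⟨O, opj⟩)
    (h : (A.objType O).δ ((A.objType O).δ (C.oval O) opi).2 opj =
      (A.objType O).δ (C.oval O) opj) :
    ∃ v, CanDecide (stp A C i) v ∧ CanDecide (stp A C j) v := by
  have hj' : A.pending j ((stp A C i).pstate j) = some ⟨O, opj⟩ := by
    rw [stp_pstate_ne C hij.symm]; exact hj
  obtain ⟨v, h1, h2⟩ := common_reach hW (C := stp A (stp A C i) j) (D := stp A C j) (j := j)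
    ((hC.stp i).stp j)
    (by
      funext o'
      by_cases ho : o' = O
      · subst ho
        rw [stp_oval_self hj', stp_oval_self hj, stp_oval_self hi, h]
      · rw [stp_oval_ne hj' ho, stp_oval_ne hj ho, stp_oval_ne hi ho])
    (by rw [stp_pstate_self hj', stp_pstate_self hj, stp_oval_self hi, h,
          stp_pstate_ne C hij.symm])
  exact ⟨v, h1.of_runs (l := [j]), h2⟩

/-- Steps at different objects commute. -/
lemma common_of_ne {N : ℕ} {A : Algorithm N} (hW : WaitFree A) {input : Fin N → Bool}
    {C : Config A} (hC : Reachable A input C) {O P : A.ObjIdx} (hOP : O ≠ P)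
    {opi : (A.objType O).Op} {opj : (A.objType P).Op}
    {i j : Fin N} (hij : i ≠ j) (hi : A.pending i (C.pstate i) = some ⟨O, opi⟩)
    (hj : A.pending j (C.pstate j) = some ⟨P, opj⟩) :
    ∃ v, CanDecide (stp A C i) v ∧ CanDecide (stp A C j) v := by
  have hj' : A.pending j ((stp A C i).pstate j) = some ⟨P, opj⟩ := by
    rw [stp_pstate_ne C hij.symm]; exact hj
  have hi' : A.pending i ((stp A C j).pstate i) = some ⟨O, opi⟩ := by
    rw [stp_pstate_ne C hij]; exact hi
  obtain ⟨v, h1, h2⟩ := common_reach hW (C := stp A (stp A C i) j)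
    (D := stp A (stp A C j) i) (j := i)
    ((hC.stp i).stp j)
    (by
      funext o'
      by_cases ho : o' = O
      · subst ho
        rw [stp_oval_ne hj' hOP, stp_oval_self hi, stp_oval_self hi', stp_oval_ne hj hOP]
      · rw [stp_oval_ne hi' ho]
        by_cases hp : o' = P
        · subst hp
          rw [stp_oval_self hj', stp_oval_self hj, stp_oval_ne hi ho]
        · rw [stp_oval_ne hj' hp, stp_oval_ne hj hp, stp_oval_ne hi ho])
    (by rw [stp_pstate_ne _ hij, stp_pstate_self hi, stp_pstate_self hi', stp_oval_ne hj hOP,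
          stp_pstate_ne C hij])
  exact ⟨v, h1.of_runs (l := [j]), h2.of_runs (l := [i])⟩

theorem no_consensus_of_confusing {N : ℕ} (A : Algorithm N) {p q : Fin N} (hpq : p ≠ q)
    (hconf : ∀ O, Confusing N (A.objType O)) : ¬ SolvesWFConsensus A := by
  rintro ⟨hA, hV, hW⟩
  obtain ⟨input, h0⟩ := exists_biv_init hV hW hpq
  obtain ⟨C, hC, hb, hcrit⟩ := exists_critical hA hW h0
  -- `C` itself is undecided, so a decision for `v` passes through some one-step successor.
  have hteam : ∀ v, ∃ i, CanDecide (stp A C i) v := by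
    intro v
    obtain ⟨l, i, h⟩ := hb v
    cases l with
    | nil => exact absurd hb (not_biv_of_output hA hC h)
    | cons j l => exact ⟨j, l, i, h⟩
  have hpend : ∀ k, ∃ O op, A.pending k (C.pstate k) = some ⟨O, op⟩ := by
    intro k
    rcases h : A.pending k (C.pstate k) with _ | ⟨O, op⟩
    · exact absurd (by rwa [stp_none h]) (hcrit k)
    · exact ⟨O, op, rfl⟩
  choose ob op hop using hpend
  -- A process is on team `v` if its step leads to a configuration from which only `v` can be
  -- decided.
  have hval : ∀ k, ∃ v, ∀ w, CanDecide (stp A C k) w ↔ w = v := by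
    intro k
    obtain ⟨m, v, h⟩ := solo_decides hW (hC.stp k) k
    have hv : CanDecide (stp A C k) v := ⟨_, k, h⟩
    refine ⟨v, fun w => ⟨fun hw => ?_, fun e => e ▸ hv⟩⟩
    by_contra hwv
    refine hcrit k fun x => ?_
    cases x <;> cases v <;> cases w <;> first | assumption | exact absurd rfl hwv
  choose team hteam' using hval
  have hno : ∀ i j, team i ≠ team j →
      ¬ ∃ v, CanDecide (stp A C i) v ∧ CanDecide (stp A C j) v := by
    rintro i j hij ⟨v, h1, h2⟩
    rw [hteam'] at h1 h2
    exact hij (h1.symm.trans h2)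
  have hsurj : ∀ v, ∃ i, team i = v := fun v => by
    obtain ⟨i, hi⟩ := hteam v
    exact ⟨i, ((hteam' i v).1 hi).symm⟩
  have hsame : ∀ i j, team i ≠ team j → ob i = ob j := by
    intro i j hij
    by_contra hO
    exact hno i j hij (common_of_ne hW hC hO (fun e => hij (e ▸ rfl)) (hop i) (hop j))
  -- Both teams are nonempty, so all processes are poised at the same object.
  obtain ⟨O, hO⟩ : ∃ O, ∀ k, ob k = O := by
    obtain ⟨i, hi⟩ := hsurj true
    obtain ⟨j, hj⟩ := hsurj false
    have hij : ob i = ob j := hsame i j (by simp [hi, hj])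
    refine ⟨ob i, fun k => ?_⟩
    rcases hk : team k
    · exact hsame k i (by simp [hi, hk])
    · exact (hsame k j (by simp [hj, hk])).trans hij.symm
  have hpend : ∀ k, ∃ op, A.pending k (C.pstate k) = some ⟨O, op⟩ := by
    intro k
    rw [← hO k]
    exact ⟨op k, hop k⟩
  choose o ho using hpend
  obtain ⟨i, j, hij, h | ⟨l₁, l₂, k, hn1, hn2, hk1, hk2, h⟩⟩ := hconf O (C.oval O) o team hsurj
  · exact hno i j hij
      (common_of_unnoticed hW hC (fun e => hij (e ▸ rfl)) (ho i) (ho j) h)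
  · obtain ⟨a1, b1, c1⟩ := runs_block (o := o) (i :: l₁) hn1 C fun k _ => ho k
    obtain ⟨a2, b2, c2⟩ := runs_block (o := o) (j :: l₂) hn2 C fun k _ => ho k
    obtain ⟨v, h1, h2⟩ := common_reach hW (hC.runs (i :: l₁)) (D := runs A C (j :: l₂)) (j := k)
      (by
        funext o'
        by_cases hoo : o' = O
        · subst hoo; rw [a1, a2, h]
        · rw [b1 o' hoo, b2 o' hoo])
      (by rw [c1 k hk1, c2 k hk2])
    exact hno i j hij ⟨v, h1.of_runs (l := l₁), h2.of_runs (l := l₂)⟩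

lemma confusing_register (N : ℕ) (V : Type) : Confusing N (RegisterType V) := by
  intro u o team hteam
  obtain ⟨i, hi⟩ := hteam true
  obtain ⟨j, hj⟩ := hteam false
  -- A read is unnoticed by anyone, and any step is unnoticed by a subsequent write.
  rcases h : o j with _ | w
  · refine ⟨j, i, by simp [hi, hj], Or.inl ?_⟩
    rw [h]; rfl
  · refine ⟨i, j, by simp [hi, hj], Or.inl ?_⟩
    rw [h]; rfl

/-! ### The type `𝒯_{n,n'}` is confusing for `n + 1` processes -/

lemma applyOps_bot {N n n' : ℕ} (hn : 2 ≤ n) (o : Fin N → TOp) (l : List (Fin N)) :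
    applyOps (TType n n' hn) o (TVal.bot : TVal n) l = (TVal.bot : TVal n) := by
  induction l with
  | nil => rfl
  | cons i l ih =>
    exact ih

lemma δ_mid {n n' : ℕ} (hn : 2 ≤ n) (x : Bool) (p : Fin (n - 1)) {op : TOp}
    (h : op ≠ .opR) :
    (TType n n' hn).δ (TVal.mid x p : TVal n) op =
      if h : p.val + 1 < n - 1 then (.bit x, .mid x ⟨p.val + 1, h⟩) else (.bit x, .bot) := by
  cases op <;> first | rfl | exact absurd rfl h

lemma applyOps_mid {N n n' : ℕ} (hn : 2 ≤ n) (o : Fin N → TOp) (ho : ∀ i, o i ≠ .opR)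
    (x : Bool) (l : List (Fin N)) (p : Fin (n - 1)) (hl : n - 1 ≤ p.val + l.length) :
    applyOps (TType n n' hn) o (TVal.mid x p : TVal n) l = (TVal.bot : TVal n) := by
  induction l generalizing p with
  | nil => have := p.2; simp at hl; omega
  | cons i l ih =>
    change applyOps (TType n n' hn) o
      ((TType n n' hn).δ (TVal.mid x p : TVal n) (o i)).2 l = _
    rw [δ_mid hn x p (ho i)]
    split
    · apply ih
      simp only [List.length_cons] at hl
      simp only
      omega
    · exact applyOps_bot hn o l

lemma applyOps_s {N n n' : ℕ} (hn : 2 ≤ n) (o : Fin N → TOp) (ho : ∀ i, o i ≠ .opR)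
    (i : Fin N) (l : List (Fin N)) (hl : n - 1 ≤ l.length) :
    applyOps (TType n n' hn) o (TVal.s : TVal n) (i :: l) = (TVal.bot : TVal n) := by
  change applyOps (TType n n' hn) o ((TType n n' hn).δ (TVal.s : TVal n) (o i)).2 l = _
  rcases h : o i
  · exact applyOps_mid hn o ho false l _ (by simpa using hl)
  · exact applyOps_mid hn o ho true l _ (by simpa using hl)
  · exact absurd h (ho i)

/-- On a value `s_{x,p}`, a step `op_R` either changes nothing, or leads to `s_⊥`, in which case
it also does so after one `op_0` or `op_1`. -/
lemma opR_mid {n n' : ℕ} (hn : 2 ≤ n) (x : Bool) (p : Fin (n - 1)) {op : TOp}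
    (h : op ≠ .opR) :
    ((TType n n' hn).δ (TVal.mid x p : TVal n) TOp.opR).2 = (TVal.mid x p : TVal n) ∨
    ((TType n n' hn).δ (TVal.mid x p : TVal n) TOp.opR).2 =
      ((TType n n' hn).δ ((TType n n' hn).δ (TVal.mid x p : TVal n) op).2 TOp.opR).2 := by
  by_cases hp : p.val + 1 ≤ n'
  · left
    simp [TType, hp]
  · right
    rw [δ_mid hn x p h]
    split
    · simp [TType, hp, show ¬ p.val + 1 + 1 ≤ n' by omega]
    · simp [TType, hp]

lemma confusing_TType (n n' : ℕ) (hn : 2 ≤ n) : Confusing (n + 1) (TType n n' hn) := by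
  classical
  intro (u : TVal n) (o : Fin (n + 1) → TOp) team hteam
  -- A step that does not change the value is unnoticed by anyone.
  by_cases hsilent : ∃ r, ((TType n n' hn).δ u (o r)).2 = u
  · obtain ⟨r, hr⟩ := hsilent
    obtain ⟨j, hj⟩ := hteam (!team r)
    exact ⟨r, j, by simp [hj], Or.inl (by rw [hr])⟩
  simp only [not_exists] at hsilent
  obtain ⟨i, hi⟩ := hteam true
  obtain ⟨j, hj⟩ := hteam false
  have hij : i ≠ j := by rintro rfl; simp [hi] at hj
  obtain ⟨k, hki, hkj⟩ : ∃ k : Fin (n + 1), k ≠ i ∧ k ≠ j := by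
    obtain ⟨k, hk⟩ := Finset.exists_mem_notMem_of_card_lt_card
      (s := ({i, j} : Finset (Fin (n + 1)))) (t := Finset.univ)
      (by have := Finset.card_le_two (a := i) (b := j); simp; omega)
    simp only [Finset.mem_insert, Finset.mem_singleton, not_or] at hk
    exact ⟨k, hk.2⟩
  cases u with
  | bot => exact absurd rfl (hsilent i)
  | s =>
    have ho : ∀ r, o r ≠ TOp.opR := fun r hr => hsilent r (by rw [hr]; rfl)
    -- All processes except `k` take a step, with a prescribed one going first.
    let L : Fin (n + 1) → List (Fin (n + 1)) := fun r => ((Finset.univ.erase k).erase r).toList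
    have hL : ∀ r, k ≠ r → (r :: L r).Nodup ∧ k ∉ r :: L r ∧ n - 1 ≤ (L r).length := by
      intro r hr
      refine ⟨?_, ?_, ?_⟩
      · simp [L, Finset.nodup_toList]
      · simp [L, hr]
      · simp [L, Finset.length_toList, Finset.card_erase_of_mem, hr.symm]
    obtain ⟨n1, k1, len1⟩ := hL i hki
    obtain ⟨n2, k2, len2⟩ := hL j hkj
    refine ⟨i, j, by simp [hi, hj], Or.inr ⟨L i, L j, k, n1, n2, k1, k2, ?_⟩⟩
    exact (applyOps_s hn o ho i _ len1).trans (applyOps_s hn o ho j _ len2).symm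
  | mid x p =>
    have key : ∀ r t, o r = TOp.opR → o t ≠ TOp.opR →
        applyOps (TType n n' hn) o (TVal.mid x p : TVal n) [r] =
          applyOps (TType n n' hn) o (TVal.mid x p : TVal n) [t, r] := by
      intro r t hr ht
      rcases opR_mid (n' := n') hn x p ht with h | h
      · exact absurd (hr ▸ h) (hsilent r)
      · simp only [applyOps, hr]
        exact h
    refine ⟨i, j, by simp [hi, hj], Or.inr ?_⟩
    by_cases hoi : o i = TOp.opR <;> by_cases hoj : o j = TOp.opR
    · refine ⟨[], [], k, by simp, by simp, by simp [hki], by simp [hkj], ?_⟩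
      simp only [applyOps, hoi, hoj]
    · exact ⟨[], [i], k, by simp, by simp [hij.symm], by simp [hki], by simp [hki, hkj],
        key i j hoi hoj⟩
    · exact ⟨[j], [], k, by simp [hij], by simp, by simp [hki, hkj], by simp [hkj],
        (key j i hoj hoi).symm⟩
    · refine ⟨[], [], k, by simp, by simp, by simp [hki], by simp [hkj], ?_⟩
      simp only [applyOps, δ_mid hn x p hoi, δ_mid hn x p hoj]

end RecoverableConsensus

open RecoverableConsensus in
/-- For all integers `n > n' ≥ 1`, the type `𝒯_{n,n'}` has consensus
number exactly `n`: there is a wait-free binary consensus algorithm for `n` processes using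
objects of type `𝒯_{n,n'}` together with registers, but no such algorithm for `n+1`
processes. -/
theorem TType_consensus_number
    (n n' : ℕ) (h1 : 1 ≤ n') (h2 : n' < n) (hn : 2 ≤ n) :
    (∃ A : Algorithm n, UsesTypeAndRegisters A (TType n n' hn) ∧ SolvesWFConsensus A) ∧
    ¬ (∃ A : Algorithm (n + 1),
        UsesTypeAndRegisters A (TType n n' hn) ∧ SolvesWFConsensus A) := by
  refine ⟨⟨oneShot n n' hn, fun _ => Or.inl rfl, oneShot_solves n n' hn⟩, ?_⟩
  rintro ⟨A, hT, hA⟩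
  refine no_consensus_of_confusing A (p := 0) (q := Fin.last n)
    (by intro h; have := congrArg Fin.val h; simp at this; omega) (fun O => ?_) hA
  rcases hT O with h | ⟨V, h⟩ <;> rw [h]
  · exact confusing_TType n n' hn
  · exact confusing_register _ V
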